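/- Let P, I, C be n×n matrices with entries in ℝ ∪ {-∞} such that P_{jj} ≠ -∞ for every index j. Over the three-letter alphabet Σ = {p, i, c} with μ(p) = P, μ(i) = I, μ(c) = C, let 𝒫 = {c}^* · {p} · {c}^*, ℐ = {c}^* · {i} · {c}^*, and S = S(𝒫, ℐ, ⌊n/2⌋). Then G(P ⊕ I ⊕ C) ∈ Γ (equivalently, the multi-precedence graph G(P, I, C) contains no circuit with positive weight) if and only if G(C) ∈ Γ, G(μ(𝒫 · S^*)) ∈ Γ, and G(μ(ℐ · S^*)) ∈ Γ. -/

import Mathlib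

open scoped Classical

namespace NCP

/-- Square max-plus matrices over the extended reals. -/
abbrev MPMat (n : ℕ) := Fin n → Fin n → EReal

/-- Max-plus matrix product: `(A ⊗ B) i j = ⨆ k, A i k + B k j`. -/
noncomputable def mpMul {n : ℕ} (A B : MPMat n) : MPMat n :=
  fun i j => ⨆ k : Fin n, A i k + B k j

/-- Max-plus identity matrix `E_⊗`. -/
noncomputable def mpId {n : ℕ} : MPMat n :=
  fun i j => if i = j then 0 else ⊥

/-- Max-plus matrix powers. -/
noncomputable def mpPow {n : ℕ} (A : MPMat n) : ℕ → MPMat n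
  | 0 => mpId
  | k + 1 => mpMul A (mpPow A k)

/-- Entrywise Kleene star `(A^*) i j = ⨆ k, (A^k) i j`. -/
noncomputable def mpStar {n : ℕ} (A : MPMat n) : MPMat n :=
  fun i j => ⨆ k : ℕ, mpPow A k i j

/-- Entrywise max of two matrices, `A ⊕ B`. -/
noncomputable def mpAdd {n : ℕ} (A B : MPMat n) : MPMat n :=
  fun i j => max (A i j) (B i j)

/-- `G(A) ∈ Γ`: all diagonal entries of all positive powers are ≤ 0. -/
def InGamma {n : ℕ} (A : MPMat n) : Prop :=
  ∀ i : Fin n, ∀ k : ℕ, 1 ≤ k → mpPow A k i i ≤ 0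

/-- `λA`: the matrix with entries `λ + A i j`. -/
noncomputable def sm {n : ℕ} (lam : ℝ) (A : MPMat n) : MPMat n :=
  fun i j => (lam : EReal) + A i j

/-- Division of an extended real by a natural number (±∞ map to ±∞). -/
noncomputable def edivNat (x : EReal) (k : ℕ) : EReal :=
  if x = ⊤ then ⊤ else if x = ⊥ then ⊥ else ((x.toReal / k : ℝ) : EReal)

/-- The maximum circuit mean of a max-plus matrix. -/
noncomputable def mcm {n : ℕ} (M : MPMat n) : EReal :=
  ⨆ k ∈ Finset.Icc 1 n, ⨆ i : Fin n, edivNat (mpPow M k i i) k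

/-- Morphism from words to max-plus matrices determined by `f` on letters. -/
noncomputable def wordMat {α : Type*} {n : ℕ} (f : α → MPMat n) : List α → MPMat n
  | [] => mpId
  | z :: s => mpMul (f z) (wordMat f s)

/-- Entrywise extension of `wordMat` to languages: `μ(L) i j = ⨆ s ∈ L, μ(s) i j`. -/
noncomputable def langMat {α : Type*} {n : ℕ} (f : α → MPMat n) (L : Language α) : MPMat n :=
  fun i j => ⨆ s ∈ L, wordMat f s i j

/-- The recursive sequence of languages `S(L₁, L₂, k)`. -/
def SL {α : Type*} (L1 L2 : Language α) : ℕ → Language α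
  | 0 => 1
  | k + 1 => L1 * SL L1 L2 k * SL L1 L2 k * L2 + L2 * SL L1 L2 k * SL L1 L2 k * L1 + 1


/-- The morphism on the three-letter alphabet `{p, i, c}` (encoded as `Fin 3` with
`p = 0`, `i = 1`, `c = 2`) sending `p` to `P`, `i` to `I` and `c` to `C`. -/
noncomputable def mu3 {n : ℕ} (P I C : MPMat n) : Fin 3 → MPMat n := ![P, I, C]

/-- The language `𝒫 = {c}^* · {p} · {c}^*` over `{p, i, c}`. -/
def langP : Language (Fin 3) :=
  KStar.kstar ({[(2 : Fin 3)]} : Language (Fin 3)) * ({[(0 : Fin 3)]} : Language (Fin 3)) *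
    KStar.kstar ({[(2 : Fin 3)]} : Language (Fin 3))

/-- The language `ℐ = {c}^* · {i} · {c}^*` over `{p, i, c}`. -/
def langI : Language (Fin 3) :=
  KStar.kstar ({[(2 : Fin 3)]} : Language (Fin 3)) * ({[(1 : Fin 3)]} : Language (Fin 3)) *
    KStar.kstar ({[(2 : Fin 3)]} : Language (Fin 3))

section Words
variable {α : Type*} {n : ℕ}

lemma mpMul_attained (A B : MPMat n) (i j : Fin n) : ∃ l, mpMul A B i j = A i l + B l j := by
  haveI : Nonempty (Fin n) := ⟨i⟩
  obtain ⟨l, hl⟩ := exists_eq_ciSup_of_finite (f := fun k : Fin n => A i k + B k j)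
  exact ⟨l, hl.symm⟩

lemma le_mpMul (A B : MPMat n) (i l j : Fin n) : A i l + B l j ≤ mpMul A B i j :=
  le_iSup (fun k : Fin n => A i k + B k j) l

lemma wordMat_append_ge (f : α → MPMat n) (s t : List α) (i k j : Fin n) :
    wordMat f s i k + wordMat f t k j ≤ wordMat f (s ++ t) i j := by
  induction s generalizing i with
  | nil =>
    by_cases h : i = k
    · subst h; simp [wordMat, mpId]
    · simp [wordMat, mpId, h]
  | cons z s ih =>
    obtain ⟨l, hl⟩ := mpMul_attained (f z) (wordMat f s) i k
    have e : wordMat f (z :: s) i k = f z i l + wordMat f s l k := hl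
    rw [e, add_assoc]
    exact (add_le_add le_rfl (ih l)).trans (le_mpMul (f z) (wordMat f (s ++ t)) i l j)

lemma wordMat_append_le (f : α → MPMat n) (s t : List α) (i j : Fin n) :
    ∃ k, wordMat f (s ++ t) i j ≤ wordMat f s i k + wordMat f t k j := by
  induction s generalizing i with
  | nil => exact ⟨i, by simp [wordMat, mpId]⟩
  | cons z s ih =>
    obtain ⟨l, hl⟩ := mpMul_attained (f z) (wordMat f (s ++ t)) i j
    obtain ⟨k, hk⟩ := ih l
    refine ⟨k, ?_⟩
    have e : wordMat f (z :: s ++ t) i j = f z i l + wordMat f (s ++ t) l j := hl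
    rw [e]
    refine (add_le_add le_rfl hk).trans ?_
    rw [← add_assoc]
    exact add_le_add (le_mpMul (f z) (wordMat f s) i l k) le_rfl

/-- Weight of the walk `v` along the word. -/
noncomputable def pathW (f : α → MPMat n) : (ℕ → Fin n) → List α → EReal
  | _, [] => 0
  | v, z :: s => f z (v 0) (v 1) + pathW f (fun t => v (t + 1)) s

lemma pathW_append (f : α → MPMat n) (s t : List α) (v : ℕ → Fin n) :
    pathW f v (s ++ t) = pathW f v s + pathW f (fun k => v (k + s.length)) t := by
  induction s generalizing v with
  | nil => simp [pathW]
  | cons z s ih =>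
    simp only [List.cons_append, pathW, ih, List.length_cons, add_assoc]
    

lemma pathW_le (f : α → MPMat n) (s : List α) (v : ℕ → Fin n) :
    pathW f v s ≤ wordMat f s (v 0) (v s.length) := by
  induction s generalizing v with
  | nil => simp [pathW, wordMat, mpId]
  | cons z s ih =>
    exact (add_le_add le_rfl (ih _)).trans (le_mpMul (f z) (wordMat f s) _ (v 1) _)

lemma exists_path (f : α → MPMat n) (s : List α) (i j : Fin n) (h : wordMat f s i j ≠ ⊥) :
    ∃ v : ℕ → Fin n, v 0 = i ∧ v s.length = j ∧ wordMat f s i j = pathW f v s := by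
  induction s generalizing i with
  | nil =>
    have : i = j := by
      by_contra hne
      exact h (by simp [wordMat, mpId, hne])
    subst this
    exact ⟨fun _ => i, rfl, rfl, by simp [wordMat, mpId, pathW]⟩
  | cons z s ih =>
    obtain ⟨l, hl⟩ := mpMul_attained (f z) (wordMat f s) i j
    have e : wordMat f (z :: s) i j = f z i l + wordMat f s l j := hl
    have h2 : wordMat f s l j ≠ ⊥ := by
      intro h3
      rw [e, h3] at h
      simp at h
    obtain ⟨v, h0, h1, hw⟩ := ih l h2
    refine ⟨fun t => Nat.casesOn t i v, rfl, h1, ?_⟩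
    rw [e, hw]
    simp [pathW, h0]

/-- A positive circuit yields a positive circuit of length at most `n`. -/
lemma short_circuit (f : α → MPMat n)
    (h : ∃ k : ℕ, ∃ s : List α, ∃ i, s.length = k ∧ 1 ≤ k ∧ 0 < wordMat f s i i) :
    ∃ s : List α, ∃ i, 1 ≤ s.length ∧ s.length ≤ n ∧ 0 < wordMat f s i i := by
  classical
  obtain ⟨s, i, hs, hk, hpos⟩ := Nat.find_spec h
  have hmin : ∀ t : List α, ∀ j, 1 ≤ t.length → t.length < s.length → wordMat f t j j ≤ 0 := by
    intro t j h1 h2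
    by_contra hc
    exact Nat.find_min h (hs ▸ h2) ⟨t, j, rfl, h1, not_le.mp hc⟩
  rw [← hs] at hk
  refine ⟨s, i, hk, ?_, hpos⟩
  by_contra hlen
  push Not at hlen
  obtain ⟨v, h0, h1, hw⟩ := exists_path f s i i (ne_bot_of_gt hpos)
  obtain ⟨a, b, hab, hbs, hv⟩ : ∃ a b : ℕ, a < b ∧ b < s.length ∧ v a = v b := by
    obtain ⟨a, b, hne, he⟩ := Fintype.exists_ne_map_eq_of_card_lt
      (fun t : Fin s.length => v t) (by simpa using hlen)
    rcases lt_or_gt_of_ne hne with hlt | hlt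
    · exact ⟨a, b, hlt, b.2, he⟩
    · exact ⟨b, a, hlt, a.2, he.symm⟩
  obtain ⟨s1, s2, s3, hsplit, l1, l2⟩ : ∃ s1 s2 s3 : List α, s = s1 ++ (s2 ++ s3) ∧
      s1.length = a ∧ s2.length = b - a := by
    refine ⟨s.take a, (s.drop a).take (b - a), (s.drop a).drop (b - a), ?_, ?_, ?_⟩
    · rw [List.take_append_drop, List.take_append_drop]
    · simp; omega
    · simp; omega
  subst hsplit
  simp only [List.length_append] at *
  rw [pathW_append, pathW_append] at hw
  set X := pathW f v s1
  have hX : X ≤ wordMat f s1 i (v a) := by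
    have := pathW_le f s1 v
    rwa [h0, l1] at this
  have hY : pathW f (fun k => v (k + s1.length)) s2 ≤ 0 := by
    refine (pathW_le f s2 _).trans ?_
    have e1 : v (0 + s1.length) = v a := by rw [l1, zero_add]
    have e2 : v (s2.length + s1.length) = v a := by rw [hv]; congr 1; omega
    simp only [e1, e2]
    exact hmin _ _ (by omega) (by omega)
  have hZ : pathW f (fun k => v (k + s2.length + s1.length)) s3 ≤ wordMat f s3 (v a) i := by
    refine (pathW_le f s3 _).trans ?_
    have e1 : v (0 + s2.length + s1.length) = v a := by rw [hv]; congr 1; omega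
    have e2 : v (s3.length + s2.length + s1.length) = i := by rw [← h1]; congr 1; omega
    simp only [e1, e2, le_refl]
  have hXZ : wordMat f s1 i (v a) + wordMat f s3 (v a) i ≤ 0 := by
    refine (wordMat_append_ge f s1 s3 i (v a) i).trans (hmin _ _ ?_ ?_)
    · simp; omega
    · simp; omega
  have : wordMat f (s1 ++ (s2 ++ s3)) i i ≤ 0 := by
    rw [hw]
    calc _ ≤ wordMat f s1 i (v a) + (0 + wordMat f s3 (v a) i) :=
          add_le_add hX (add_le_add hY hZ)
      _ ≤ 0 := by rw [zero_add]; exact hXZ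
  exact absurd hpos (not_lt.mpr this)

lemma wordMat_le_mpPow (f : α → MPMat n) (M : MPMat n) (hM : ∀ z i j, f z i j ≤ M i j)
    (s : List α) (i j : Fin n) : wordMat f s i j ≤ mpPow M s.length i j := by
  induction s generalizing i with
  | nil => exact le_rfl
  | cons z s ih =>
    refine iSup_le fun l => ?_
    exact (add_le_add (hM z i l) (ih l)).trans (le_mpMul M (mpPow M s.length) i l j)

lemma mpPow_le_wordMat (f : α → MPMat n) (M : MPMat n) (hM : ∀ i j, ∃ z, M i j ≤ f z i j)
    (k : ℕ) (i j : Fin n) : ∃ s : List α, s.length = k ∧ mpPow M k i j ≤ wordMat f s i j := by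
  induction k generalizing i with
  | zero => exact ⟨[], rfl, le_rfl⟩
  | succ k ih =>
    obtain ⟨l, hl⟩ := mpMul_attained M (mpPow M k) i j
    obtain ⟨s, hs, hw⟩ := ih l
    obtain ⟨z, hz⟩ := hM i l
    refine ⟨z :: s, by simp [hs], ?_⟩
    have e : mpPow M (k + 1) i j = M i l + mpPow M k l j := hl
    rw [e]
    exact (add_le_add hz hw).trans (le_mpMul (f z) (wordMat f s) i l j)

lemma wordMat_le_langMat (f : α → MPMat n) {L : Language α} {s : List α} (hs : s ∈ L)
    (i j : Fin n) : wordMat f s i j ≤ langMat f L i j :=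
  le_iSup₂ (f := fun s (_ : s ∈ L) => wordMat f s i j) s hs

lemma wordMat_le_langPow (f : α → MPMat n) (L : Language α) (d : ℕ) (s : List α)
    (hs : s ∈ L ^ d) (i j : Fin n) : wordMat f s i j ≤ mpPow (langMat f L) d i j := by
  induction d generalizing s i with
  | zero =>
    rw [pow_zero, Language.mem_one] at hs
    subst hs
    exact le_rfl
  | succ d ih =>
    rw [pow_succ', Language.mem_mul] at hs
    obtain ⟨a, ha, b, hb, rfl⟩ := hs
    obtain ⟨k, hk⟩ := wordMat_append_le f a b i j
    refine hk.trans ((add_le_add (wordMat_le_langMat f ha i k) (ih b hb k)).trans ?_)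
    exact le_mpMul (langMat f L) (mpPow (langMat f L) d) i k j

lemma langPow_le (f : α → MPMat n) (L : Language α) (d : ℕ) (i j : Fin n) :
    mpPow (langMat f L) d i j ≤ ⨆ s : List α, wordMat f s i j := by
  induction d generalizing i with
  | zero => exact le_iSup (fun s : List α => wordMat f s i j) []
  | succ d ih =>
    refine iSup_le fun l => ?_
    refine EReal.add_le_of_forall_lt fun x hx y hy => ?_
    obtain ⟨s, hs⟩ := lt_iSup_iff.mp hx
    obtain ⟨_, hs⟩ := lt_iSup_iff.mp hs
    obtain ⟨t, ht⟩ := lt_iSup_iff.mp (hy.trans_le (ih l))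
    refine (add_le_add hs.le ht.le).trans ((wordMat_append_ge f s t i l j).trans ?_)
    exact le_iSup (fun s : List α => wordMat f s i j) (s ++ t)

lemma InGamma_lang (f : α → MPMat n) (M : MPMat n) (hM : ∀ z i j, f z i j ≤ M i j)
    (h : InGamma M) (L : Language α) : InGamma (langMat f L) := by
  intro i k _
  refine (langPow_le f L k i i).trans (iSup_le fun s => ?_)
  refine (wordMat_le_mpPow f M hM s i i).trans ?_
  rcases Nat.eq_zero_or_pos s.length with h0 | h0
  · rw [h0]; simp [mpPow, mpId]
  · exact h i _ h0

lemma wordMat_replicate (f : α → MPMat n) (z : α) (k : ℕ) :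
    wordMat f (List.replicate k z) = mpPow (f z) k := by
  induction k with
  | zero => rfl
  | succ k ih => simp only [List.replicate_succ, wordMat, mpPow, ih]

lemma wordMat_repeat (f : α → MPMat n) (w : List α) (i : Fin n) (N : ℕ) :
    N • wordMat f w i i ≤ wordMat f (List.replicate N w).flatten i i := by
  induction N with
  | zero => simp [wordMat, mpId]
  | succ N ih =>
    rw [succ_nsmul', List.replicate_succ, List.flatten_cons]
    exact (add_le_add le_rfl ih).trans (wordMat_append_ge f _ _ i i i)

end Words

section Combinatorics

lemma split_bool (x : Bool) : ∀ (N : ℕ) (v : List Bool) (h : ℕ), v.length ≤ N →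
    v.count x + h + 1 < v.count (!x) →
    ∃ v1 v2, v = v1 ++ (!x) :: (!x) :: v2 ∧ v1.count x + h = v1.count (!x) := by
  intro N
  induction N with
  | zero =>
    intro v h hN hc
    have : v = [] := by simpa using hN
    subst this
    simp at hc
  | succ N ih =>
    intro v h hN hc
    match v, hN, hc with
    | [], _, hc => simp at hc
    | y :: v, hN, hc =>
      by_cases hy : y = x
      · subst hy
        simp only [List.length_cons] at hN
        have e : (y == !y) = false := by cases y <;> rfl
        simp only [List.count_cons, e, beq_self_eq_true, if_true] at hc
        obtain ⟨v1, v2, rfl, h2⟩ := ih v (h + 1) (by omega) (by simp at hc; omega)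
        refine ⟨y :: v1, v2, rfl, ?_⟩
        simp [List.count_cons, e]
        omega
      · obtain rfl : y = !x := by cases x <;> cases y <;> simp_all
        have e : ((!x) == x) = false := by cases x <;> rfl
        have e' : (x == (!x)) = false := by cases x <;> rfl
        simp only [List.length_cons] at hN
        simp [List.count_cons, e] at hc
        match h with
        | h + 1 =>
          obtain ⟨v1, v2, rfl, h2⟩ := ih v h (by omega) (by omega)
          refine ⟨(!x) :: v1, v2, rfl, ?_⟩
          simp [List.count_cons, e]
          omega
        | 0 =>
          match v, hN, hc with
          | [], _, hc => simp at hc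
          | y :: v, hN, hc =>
            by_cases hy : y = x
            · subst hy
              simp only [List.length_cons] at hN
              simp [List.count_cons, e'] at hc
              obtain ⟨v1, v2, rfl, h2⟩ := ih v 0 (by omega) (by omega)
              refine ⟨(!y) :: y :: v1, v2, rfl, ?_⟩
              simp [List.count_cons, e, e']
              omega
            · obtain rfl : y = !x := by cases x <;> cases y <;> simp_all
              exact ⟨[], v, rfl, by simp⟩

variable {α : Type*}

lemma one_le_SL (L1 L2 : Language α) (k : ℕ) : 1 ≤ SL L1 L2 k := by
  cases k with
  | zero => exact le_rfl
  | succ k => exact le_add_self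

lemma step_SL (F : Bool → Language α) (x : Bool) (k : ℕ) (A : Language α)
    (hA : A ≤ SL (F true) (F false) k * SL (F true) (F false) k) :
    F x * A * F (!x) ≤ SL (F true) (F false) (k + 1) := by
  have h1 : F x * A * F (!x) ≤
      F x * SL (F true) (F false) k * SL (F true) (F false) k * F (!x) := by
    rw [mul_assoc (F x) (SL _ _ _)]
    gcongr
  refine h1.trans ?_
  cases x
  · exact le_trans le_add_self le_self_add
  · exact le_trans le_self_add le_self_add

lemma balanced_mem (F : Bool → Language α) : ∀ (k : ℕ) (l : List Bool), l.length ≤ 2 * k + 1 →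
    l.count true = l.count false →
    (l.map F).prod ≤ SL (F true) (F false) k * SL (F true) (F false) k := by
  intro k
  induction k with
  | zero =>
    intro l hl hc
    match l, hl, hc with
    | [], _, _ => simpa using mul_le_mul' (one_le_SL (F true) (F false) 0) (one_le_SL (F true) (F false) 0)
    | [b], _, hc => cases b <;> simp at hc
    | _ :: _ :: _, hl, _ => simp at hl
  | succ k ih =>
    intro l hl hc
    have h11 := one_le_SL (F true) (F false) (k + 1)
    match l, hl, hc with
    | [], _, _ => simpa using mul_le_mul' h11 h11
    | x :: l, hl, hc =>
      rcases List.eq_nil_or_concat l with rfl | ⟨v, y, rfl⟩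
      · cases x <;> simp at hc
      · simp only [List.concat_eq_append, List.length_cons, List.length_append, List.length_nil] at hl
        by_cases hxy : y = x
        · subst hxy
          have hcy : v.count y + 2 = v.count (!y) := by
            cases y <;> simp [List.count_cons] at hc ⊢ <;> omega
          obtain ⟨v1, v2, rfl, h1⟩ := split_bool y v.length v 0 le_rfl (by omega)
          have e : ((!y) == y) = false := by cases y <;> rfl
          simp [List.count_cons, e] at hcy hl
          have hb1 : v1.count true = v1.count false := by
            cases y <;> simp at h1 <;> omega
          have hb2 : v2.count true = v2.count false := by
            cases y <;> simp at h1 hcy <;> omega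
          have s1 := step_SL F y k _ (ih v1 (by omega) hb1)
          have s2 := step_SL F (!y) k _ (ih v2 (by omega) hb2)
          have := mul_le_mul' s1 s2
          simpa [mul_assoc] using this
        · obtain rfl : y = !x := by cases x <;> cases y <;> simp_all
          have hb : v.count true = v.count false := by
            cases x <;> simp [List.count_cons] at hc ⊢ <;> omega
          have := mul_le_mul' (step_SL F x k _ (ih v (by omega) hb)) h11
          simpa [mul_assoc] using this

lemma last_split (x : Bool) (l : List Bool) (h : l.count (!x) < l.count x) :
    ∃ l1 D, l = l1 ++ x :: D ∧ D.count x = D.count (!x) := by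
  induction l with
  | nil => simp at h
  | cons y l ih =>
    by_cases hl : l.count (!x) < l.count x
    · obtain ⟨l1, D, rfl, hD⟩ := ih hl
      exact ⟨y :: l1, D, rfl, hD⟩
    · by_cases hy : y = x
      · subst hy
        have e : (y == !y) = false := by cases y <;> rfl
        simp [List.count_cons, e] at h
        exact ⟨[], l, rfl, by omega⟩
      · obtain rfl : y = !x := by cases x <;> cases y <;> simp_all
        have e : ((!x) == x) = false := by cases x <;> rfl
        simp [List.count_cons, e] at h
        omega

lemma balanced_star (F : Bool → Language α) (k : ℕ) (l : List Bool) (hl : l.length ≤ 2 * k + 1)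
    (x : Bool) (hc : l.count x = l.count (!x)) :
    (l.map F).prod ≤ KStar.kstar (SL (F true) (F false) k) := by
  refine (balanced_mem F k l hl (by cases x <;> simp at hc <;> omega)).trans ?_
  rw [← kstar_mul_kstar (SL (F true) (F false) k)]
  exact mul_le_mul' le_kstar le_kstar

lemma excess_split (F : Bool → Language α) (k : ℕ) (x : Bool) (d : ℕ) :
    ∀ l : List Bool, l.length ≤ 2 * k + 1 → l.count x = l.count (!x) + d →
    ∃ D r, l = D ++ r ∧ D.count x = D.count (!x) ∧
      (r.map F).prod ≤ (F x * KStar.kstar (SL (F true) (F false) k)) ^ d := by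
  induction d with
  | zero => exact fun l _ hc => ⟨l, [], by simp, hc, by simp⟩
  | succ d ih =>
    intro l hl hc
    obtain ⟨l1, E, rfl, hE⟩ := last_split x l (by omega)
    have e : (x == !x) = false := by cases x <;> rfl
    simp [List.count_cons, e] at hc hl
    obtain ⟨D, r, rfl, hD, hr⟩ := ih l1 (by omega) (by omega)
    refine ⟨D, r ++ x :: E, by simp, hD, ?_⟩
    rw [pow_succ, List.map_append, List.prod_append, List.map_cons, List.prod_cons]
    exact mul_le_mul' hr (mul_le_mul' le_rfl (balanced_star F k E (by omega) x hE))

end Combinatorics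

/-- The two block languages indexed by booleans. -/
def blk (b : Bool) : Language (Fin 3) := bif b then langP else langI

lemma blk_c (b : Bool) : ({[(2 : Fin 3)]} : Language (Fin 3)) * blk b ≤ blk b := by
  have h : ({[(2 : Fin 3)]} : Language (Fin 3)) * KStar.kstar ({[(2 : Fin 3)]} : Language (Fin 3))
      ≤ KStar.kstar ({[(2 : Fin 3)]} : Language (Fin 3)) := mul_kstar_le_kstar
  cases b
  · simp only [blk, langI, cond_false, ← mul_assoc]
    gcongr
  · simp only [blk, langP, cond_true, ← mul_assoc]
    gcongr

lemma replicate_mem (k : ℕ) :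
    List.replicate k (2 : Fin 3) ∈ KStar.kstar ({[(2 : Fin 3)]} : Language (Fin 3)) := by
  rw [Language.mem_kstar]
  refine ⟨List.replicate k [2], by simp, ?_⟩
  intro y hy
  rw [List.eq_of_mem_replicate hy]
  exact Set.mem_singleton _

lemma blk_letter (b : Bool) (k : ℕ) :
    (bif b then (0 : Fin 3) else 1) :: List.replicate k 2 ∈ blk b := by
  have h0 := replicate_mem 0
  cases b
  · have := Language.append_mem_mul (Language.append_mem_mul h0 (show [(1 : Fin 3)] ∈ ({[(1 : Fin 3)]} : Language (Fin 3)) from Set.mem_singleton _)) (replicate_mem k)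
    exact this
  · have := Language.append_mem_mul (Language.append_mem_mul h0 (show [(0 : Fin 3)] ∈ ({[(0 : Fin 3)]} : Language (Fin 3)) from Set.mem_singleton _)) (replicate_mem k)
    exact this

lemma blocks (w : List (Fin 3)) : w = List.replicate w.length 2 ∨
    ∃ l : List Bool, l ≠ [] ∧ l.length ≤ w.length ∧ w ∈ (l.map blk).prod := by
  induction w with
  | nil => left; rfl
  | cons z w ih =>
    by_cases hz : z = 2
    · subst hz
      rcases ih with ih | ⟨l, hne, hl, hw⟩
      · left
        rw [List.length_cons, List.replicate_succ, ← ih]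
      · right
        refine ⟨l, hne, by simp; omega, ?_⟩
        match l, hne, hw with
        | b :: l, _, hw =>
          rw [List.map_cons, List.prod_cons] at hw ⊢
          have h2 := Language.append_mem_mul (Set.mem_singleton [(2 : Fin 3)]) hw
          have h3 : ({[(2 : Fin 3)]} : Language (Fin 3)) * (blk b * (l.map blk).prod) ≤
              blk b * (l.map blk).prod := by
            rw [← mul_assoc]
            exact mul_le_mul' (blk_c b) le_rfl
          exact h3 h2
    · right
      obtain ⟨b, rfl⟩ : ∃ b : Bool, z = bif b then (0 : Fin 3) else 1 := by
        fin_cases z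
        · exact ⟨true, rfl⟩
        · exact ⟨false, rfl⟩
        · exact absurd rfl hz
      rcases ih with ih | ⟨l, hne, hl, hw⟩
      · refine ⟨[b], by simp, by simp, ?_⟩
        rw [ih]
        simpa using blk_letter b w.length
      · refine ⟨b :: l, by simp, by simpa using hl, ?_⟩
        rw [List.map_cons, List.prod_cons]
        exact Language.append_mem_mul (blk_letter b 0) hw

/-- Unbalanced case. -/
lemma excess_case {n : ℕ} (f : Fin 3 → MPMat n) (x : Bool)
    (h : InGamma (langMat f (blk x * KStar.kstar (SL langP langI (n / 2)))))
    (w : List (Fin 3)) (i : Fin n) (hpos : 0 < wordMat f w i i) (l : List Bool)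
    (hl : l.length ≤ n) (hw : w ∈ (l.map blk).prod) (hx : l.count (!x) < l.count x) : False := by
  obtain ⟨d, hd⟩ := Nat.exists_eq_add_of_lt hx
  obtain ⟨D, r, rfl, hD, hr⟩ := excess_split blk (n / 2) x (d + 1) l (by omega) (by omega)
  rw [List.map_append, List.prod_append, Language.mem_mul] at hw
  obtain ⟨a, ha, b, hb, rfl⟩ := hw
  obtain ⟨j, hj⟩ := wordMat_append_le f a b i i
  rw [add_comm] at hj
  have hj2 := hj.trans (wordMat_append_ge f b a j i j)
  rw [List.length_append] at hl
  have hD2 := balanced_star blk (n / 2) D (by omega) x hD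
  have hmem := Language.append_mem_mul (hr hb) (hD2 ha)
  have hle : (blk x * KStar.kstar (SL (blk true) (blk false) (n / 2))) ^ (d + 1) *
      KStar.kstar (SL (blk true) (blk false) (n / 2)) =
      (blk x * KStar.kstar (SL (blk true) (blk false) (n / 2))) ^ (d + 1) := by
    rw [pow_succ, mul_assoc, mul_assoc (blk x), kstar_mul_kstar]
  rw [hle] at hmem
  have h1 := wordMat_le_langPow f _ _ _ hmem j j
  exact absurd (hpos.trans_le (hj2.trans h1)) (not_lt.mpr (h j (d + 1) (by omega)))

/-- Balanced case. -/
lemma balanced_case {n : ℕ} (f : Fin 3 → MPMat n) (hd : ∀ j, f 0 j j ≠ ⊥)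
    (h : InGamma (langMat f (langP * KStar.kstar (SL langP langI (n / 2)))))
    (w : List (Fin 3)) (i : Fin n) (hpos : 0 < wordMat f w i i) (l : List Bool)
    (hl : l.length ≤ n) (hw : w ∈ (l.map blk).prod) (hx : l.count true = l.count false) :
    False := by
  have hS : w ∈ KStar.kstar (SL langP langI (n / 2)) :=
    balanced_star blk (n / 2) l (by omega) true hx hw
  have hrep : ∀ N, (List.replicate N w).flatten ∈ KStar.kstar (SL langP langI (n / 2)) := by
    intro N
    induction N with
    | zero => exact (one_le_kstar (a := SL langP langI (n / 2))) (Language.nil_mem_one)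
    | succ N ih =>
      rw [← kstar_mul_kstar, List.replicate_succ, List.flatten_cons]
      exact Language.append_mem_mul hS ih
  obtain ⟨e, he0, he⟩ : ∃ e : ℝ, 0 < e ∧ (e : EReal) ≤ wordMat f w i i := by
    obtain ⟨e, h1, h2⟩ := EReal.lt_iff_exists_real_btwn.mp hpos
    exact ⟨e, by exact_mod_cast h1, h2.le⟩
  obtain ⟨p, hp⟩ : ∃ p : ℝ, (p : EReal) ≤ f 0 i i := by
    obtain ⟨p, _, h2⟩ := EReal.lt_iff_exists_real_btwn.mp (bot_lt_iff_ne_bot.mpr (hd i))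
    exact ⟨p, h2.le⟩
  obtain ⟨N, hN⟩ := exists_nat_gt (-p / e)
  rw [div_lt_iff₀ he0] at hN
  have hmem := Language.append_mem_mul (blk_letter true 0) (hrep N)
  have h1 := wordMat_le_langMat f hmem i i
  have h2 : wordMat f [(0 : Fin 3)] i i = mpPow (f 0) 1 i i := by
    rw [← wordMat_replicate]; rfl
  have h3 : f 0 i i ≤ wordMat f [(0 : Fin 3)] i i := by
    have := le_mpMul (f 0) mpId i i i
    simp only [mpId, if_true, add_zero] at this
    exact this
  have h4 : ((N * e : ℝ) : EReal) ≤ wordMat f (List.replicate N w).flatten i i := by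
    refine le_trans ?_ (wordMat_repeat f w i N)
    have := nsmul_le_nsmul_right he N
    refine le_trans (le_of_eq ?_) this
    clear * -
    induction N with
    | zero => simp
    | succ N ih => rw [succ_nsmul, ← ih, ← EReal.coe_add]; congr 1; push_cast; ring
  have h5 := (add_le_add (hp.trans h3) h4).trans (wordMat_append_ge f _ _ i i i)
  have h6 := h i 1 le_rfl
  have h7 : langMat f (langP * KStar.kstar (SL langP langI (n / 2))) i i ≤ 0 := by
    refine le_trans ?_ h6
    have := le_mpMul (langMat f (langP * KStar.kstar (SL langP langI (n / 2)))) mpId i i i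
    simp only [mpId, if_true, add_zero] at this
    exact this
  have h8 := h5.trans (h1.trans h7)
  have h9 : p + N * e ≤ 0 := by exact_mod_cast h8
  linarith

/-- with `𝒫 = {c}^*·{p}·{c}^*`, `ℐ = {c}^*·{i}·{c}^*` and
`S = S(𝒫, ℐ, ⌊n/2⌋)`, we have `G(P ⊕ I ⊕ C) ∈ Γ` iff `G(C) ∈ Γ`,
`G(μ(𝒫·S^*)) ∈ Γ` and `G(μ(ℐ·S^*)) ∈ Γ`. -/
theorem stmt17 {n : ℕ} (P I C : MPMat n)
    (hP : ∀ i j, P i j ≠ ⊤) (hI : ∀ i j, I i j ≠ ⊤) (hC : ∀ i j, C i j ≠ ⊤)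
    (hPd : ∀ j, P j j ≠ ⊥) :
    InGamma (mpAdd (mpAdd P I) C) ↔
      (InGamma C ∧
       InGamma (langMat (mu3 P I C) (langP * KStar.kstar (SL langP langI (n / 2)))) ∧
       InGamma (langMat (mu3 P I C) (langI * KStar.kstar (SL langP langI (n / 2))))) := by
  have hle : ∀ z i j, mu3 P I C z i j ≤ mpAdd (mpAdd P I) C i j := by
    intro z i j
    fin_cases z
    · exact (le_max_left _ _).trans (le_max_left _ _)
    · exact (le_max_right _ _).trans (le_max_left _ _)
    · exact le_max_right _ _
  have hge : ∀ i j, ∃ z, mpAdd (mpAdd P I) C i j ≤ mu3 P I C z i j := by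
    intro i j
    rcases max_choice (max (P i j) (I i j)) (C i j) with h | h
    · rcases max_choice (P i j) (I i j) with h' | h'
      · exact ⟨0, (h.trans h').le⟩
      · exact ⟨1, (h.trans h').le⟩
    · exact ⟨2, h.le⟩
  constructor
  · intro h
    refine ⟨?_, InGamma_lang _ _ hle h _, InGamma_lang _ _ hle h _⟩
    intro i k hk
    have h1 := wordMat_le_mpPow (mu3 P I C) _ hle (List.replicate k 2) i i
    rw [wordMat_replicate, List.length_replicate] at h1
    exact h1.trans (h i k hk)
  · rintro ⟨h1, h2, h3⟩ i k hk
    by_contra hc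
    obtain ⟨s0, hs0, hw0⟩ := mpPow_le_wordMat (mu3 P I C) _ hge k i i
    obtain ⟨s, j, hs1, hsn, hpos⟩ := short_circuit (mu3 P I C)
      ⟨k, s0, i, hs0, hk, (not_le.mp hc).trans_le hw0⟩
    rcases blocks s with hs | ⟨l, _, hl, hw⟩
    · rw [hs, wordMat_replicate] at hpos
      exact absurd hpos (not_lt.mpr (h1 j _ hs1))
    · rcases lt_trichotomy (l.count true) (l.count false) with hlt | heq | hgt
      · exact excess_case _ false h3 s j hpos l (hl.trans hsn) hw hlt
      · exact balanced_case _ hPd h2 s j hpos l (hl.trans hsn) hw heq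
      · exact excess_case _ true h2 s j hpos l (hl.trans hsn) hw hgt

end NCP
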